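/- (Lipschitz continuity of a single-layer transformer with respect to its input.) Let X, X̂ ∈ ℝ^{B×d} have all rows of ℓ² norm at most R; let W_Q, W_K, W_V, W_O ∈ ℝ^{d×d}, W_U ∈ ℝ^{d×d_int}, W_D ∈ ℝ^{d_int×d}, E ∈ ℝ^{m×d}, and let σ : ℝ → ℝ be G_σ-Lipschitz, applied entrywise. For each i define q_i = x_i W_Q, a_i = softmax(q_i (X W_K)ᵀ / √d), o_i = a_i (X W_V) W_O, h_i = σ(o_i W_U) W_D, and p_i = softmax(h_i Eᵀ) ∈ ℝ^m; define p̂_i analogously from X̂. Then Σ_{i=1}^B ‖p_i − p̂_i‖₁ ≤ G Σ_{i=1}^B ‖x_i − x̂_i‖₂, where G = ‖E‖_{2→1} ‖W_D‖₂ G_σ ‖W_U‖₂ ‖W_O‖₂ ‖W_V‖₂ B (2 R² ‖W_Q‖₂ ‖W_K‖₂ / √d + 1). -/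

import Mathlib

/-!
The composition is Lipschitz layer by layer. Two facts carry the argument.

* `l1_softmax_sub_le`: softmax is 1-Lipschitz from `ℓ^∞` to `ℓ¹`. Along the segment joining two
  logit vectors, the derivative of a signed sum of softmax entries is a mean of signed deviations
  of the direction `u` from its average; by Cauchy–Schwarz it is at most the standard deviation of
  `u`, hence at most `max |u|`. The mean value inequality concludes.
* `l2_attention_sub_le`: writing `a X - â X̂ = a (X - X̂) + (a - â) X̂`, the first term is a
  convex combination of the row displacements `Δ_j = ‖x_j - x̂_j‖₂`, and the second is at most
  `R ‖a - â‖₁`, which the softmax bound controls by the largest change of an attention score.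
  That change is at most `R ‖W_Q‖ ‖W_K‖ (Δ_i + Δ_j) / √d` since the score is bilinear.

With `S = ∑ Δ_j`, row `i` therefore contributes at most a constant times
`S + R² ‖W_Q‖ ‖W_K‖ (Δ_i + S) / √d`. Summing over the `B` rows and using `S ≤ B S` gives the
factor `B (2 R² ‖W_Q‖ ‖W_K‖ / √d + 1)`.
-/

open scoped BigOperators
open Matrix

/-- Softmax of a vector. -/
noncomputable def softmax {n : ℕ} (z : Fin n → ℝ) : Fin n → ℝ :=
  fun j => Real.exp (z j) / ∑ k, Real.exp (z k)

/-- ℓ¹ norm. -/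
noncomputable def l1 {n : ℕ} (v : Fin n → ℝ) : ℝ := ∑ j, |v j|

/-- ℓ² (Euclidean) norm. -/
noncomputable def l2 {n : ℕ} (v : Fin n → ℝ) : ℝ := Real.sqrt (∑ j, v j ^ 2)

/-- ℓ^∞ norm. -/
noncomputable def linf {n : ℕ} (v : Fin n → ℝ) : ℝ := ⨆ j, |v j|

/-- Spectral norm (operator ℓ²→ℓ² norm) of a matrix acting on row vectors. -/
noncomputable def spec {m n : ℕ} (W : Matrix (Fin m) (Fin n) ℝ) : ℝ :=
  sSup {c | ∃ x : Fin m → ℝ, l2 x ≤ 1 ∧ c = l2 (x ᵥ* W)}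

/-- Frobenius norm of a matrix. -/
noncomputable def frob {m n : ℕ} (W : Matrix (Fin m) (Fin n) ℝ) : ℝ :=
  Real.sqrt (∑ i, ∑ j, W i j ^ 2)

/-- Operator norm of `h ↦ h Eᵀ` from ℓ² to ℓ¹. -/
noncomputable def opNorm21 {m d : ℕ} (E : Matrix (Fin m) (Fin d) ℝ) : ℝ :=
  sSup {c | ∃ h : Fin d → ℝ, l2 h ≤ 1 ∧ c = l1 (h ᵥ* Eᵀ)}

/-- Operator norm of `h ↦ h Eᵀ` from ℓ² to ℓ^∞. -/
noncomputable def opNorm2inf {m d : ℕ} (E : Matrix (Fin m) (Fin d) ℝ) : ℝ :=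
  sSup {c | ∃ h : Fin d → ℝ, l2 h ≤ 1 ∧ c = linf (h ᵥ* Eᵀ)}

/-- Condition number `κ(W) = σ_max(W)/σ_min(W)` of an invertible matrix,
expressed as `σ_max(W) · σ_max(W⁻¹)`. -/
noncomputable def condNum {d : ℕ} (W : Matrix (Fin d) (Fin d) ℝ) : ℝ := spec W * spec W⁻¹

/-- Output distribution of a single-layer transformer (attention + MLP + softmax head)
for the `i`-th token of input `X`. -/
noncomputable def layerP {B d dint m : ℕ}
    (WQ WK WV WO : Matrix (Fin d) (Fin d) ℝ)
    (WU : Matrix (Fin d) (Fin dint) ℝ) (WD : Matrix (Fin dint) (Fin d) ℝ)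
    (E : Matrix (Fin m) (Fin d) ℝ) (σ : ℝ → ℝ)
    (X : Matrix (Fin B) (Fin d) ℝ) (i : Fin B) : Fin m → ℝ :=
  let q : Fin d → ℝ := X i ᵥ* WQ
  let a : Fin B → ℝ := softmax (fun j => (q ᵥ* (X * WK)ᵀ) j / Real.sqrt d)
  let o : Fin d → ℝ := (a ᵥ* (X * WV)) ᵥ* WO
  let h : Fin d → ℝ := (fun k => σ ((o ᵥ* WU) k)) ᵥ* WD
  softmax (h ᵥ* Eᵀ)

lemma l2_eq_norm {n : ℕ} (v : Fin n → ℝ) : l2 v = ‖WithLp.toLp 2 v‖ := by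
  simp [l2, EuclideanSpace.norm_eq]

lemma l2_nonneg {n : ℕ} (v : Fin n → ℝ) : 0 ≤ l2 v := Real.sqrt_nonneg _

lemma l1_nonneg {n : ℕ} (v : Fin n → ℝ) : 0 ≤ l1 v :=
  Finset.sum_nonneg fun _ _ => abs_nonneg _

lemma l2_add_le {n : ℕ} (v w : Fin n → ℝ) : l2 (v + w) ≤ l2 v + l2 w := by
  simp only [l2_eq_norm, WithLp.toLp_add]
  exact norm_add_le _ _

lemma l2_smul {n : ℕ} (c : ℝ) (v : Fin n → ℝ) : l2 (c • v) = |c| * l2 v := by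
  simp only [l2_eq_norm, WithLp.toLp_smul, norm_smul, Real.norm_eq_abs]

lemma l1_smul {n : ℕ} (c : ℝ) (v : Fin n → ℝ) : l1 (c • v) = |c| * l1 v := by
  simp [l1, abs_mul, Finset.mul_sum]

lemma abs_le_l2 {n : ℕ} (v : Fin n → ℝ) (k : Fin n) : |v k| ≤ l2 v := by
  apply Real.abs_le_sqrt
  exact Finset.single_le_sum (f := fun j => v j ^ 2) (fun _ _ => sq_nonneg _) (Finset.mem_univ k)

lemma abs_dotProduct_le {n : ℕ} (v w : Fin n → ℝ) : |v ⬝ᵥ w| ≤ l2 v * l2 w := by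
  rw [l2, l2, ← Real.sqrt_mul (Finset.sum_nonneg fun _ _ => sq_nonneg _)]
  exact Real.abs_le_sqrt (Finset.sum_mul_sq_le_sq_mul_sq _ _ _)

/-- A linear combination of the rows of `M` is bounded by the weighted sum of the row norms. -/
lemma l2_vecMul_le {m n : ℕ} (a : Fin m → ℝ) (M : Matrix (Fin m) (Fin n) ℝ) :
    l2 (a ᵥ* M) ≤ ∑ k, |a k| * l2 (M k) := by
  have h : a ᵥ* M = ∑ k, a k • M k := by
    ext j
    simp [Matrix.vecMul, dotProduct]
  rw [h]
  calc l2 (∑ k, a k • M k) = ‖∑ k, WithLp.toLp 2 (a k • M k)‖ := by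
        rw [l2_eq_norm, WithLp.toLp_sum]
    _ ≤ ∑ k, ‖WithLp.toLp 2 (a k • M k)‖ := norm_sum_le _ _
    _ = ∑ k, |a k| * l2 (M k) := by simp only [← l2_eq_norm, l2_smul]

/-- The supremum of an absolutely homogeneous functional `N` over the Euclidean unit ball acts as
an operator norm as soon as `N` has some finite bound `C`, which keeps the `sSup` from taking its
junk value. -/
lemma le_sSup_unitBall_mul {n : ℕ} (N : (Fin n → ℝ) → ℝ) (C : ℝ) (hC : 0 ≤ C)
    (hhom : ∀ (c : ℝ) x, N (c • x) = |c| * N x) (hN : ∀ x, N x ≤ C * l2 x) (x : Fin n → ℝ) :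
    N x ≤ sSup {c | ∃ x : Fin n → ℝ, l2 x ≤ 1 ∧ c = N x} * l2 x := by
  rcases (l2_nonneg x).eq_or_lt with h0 | hpos
  · simpa [← h0] using hN x
  have hb : BddAbove {c | ∃ x : Fin n → ℝ, l2 x ≤ 1 ∧ c = N x} := by
    refine ⟨C, ?_⟩
    rintro c ⟨y, hy, rfl⟩
    exact (hN y).trans (mul_le_of_le_one_right hC hy)
  have h := le_csSup hb ⟨(l2 x)⁻¹ • x, by
    rw [l2_smul, abs_of_pos (inv_pos.2 hpos), inv_mul_cancel₀ hpos.ne'], rfl⟩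
  rw [hhom, abs_of_pos (inv_pos.2 hpos), inv_mul_le_iff₀ hpos] at h
  linarith

lemma l2_vecMul_le_spec {m n : ℕ} (W : Matrix (Fin m) (Fin n) ℝ) (x : Fin m → ℝ) :
    l2 (x ᵥ* W) ≤ spec W * l2 x := by
  refine le_sSup_unitBall_mul (fun x => l2 (x ᵥ* W)) (∑ k, l2 (W k))
    (Finset.sum_nonneg fun _ _ => l2_nonneg _) ?_ ?_ x
  · intro c x
    simp only [Matrix.smul_vecMul, l2_smul]
  · intro x
    refine (l2_vecMul_le x W).trans ?_
    rw [Finset.sum_mul]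
    refine Finset.sum_le_sum fun k _ => ?_
    rw [mul_comm]
    exact mul_le_mul_of_nonneg_left (abs_le_l2 x k) (l2_nonneg _)

lemma l1_vecMul_le_opNorm21 {m d : ℕ} (E : Matrix (Fin m) (Fin d) ℝ) (h : Fin d → ℝ) :
    l1 (h ᵥ* Eᵀ) ≤ opNorm21 E * l2 h := by
  refine le_sSup_unitBall_mul (fun x => l1 (x ᵥ* Eᵀ)) (∑ k, l2 (E k))
    (Finset.sum_nonneg fun _ _ => l2_nonneg _) ?_ ?_ h
  · intro c x
    simp only [Matrix.smul_vecMul, l1_smul]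
  · intro x
    rw [Finset.sum_mul]
    refine Finset.sum_le_sum fun k _ => ?_
    rw [mul_comm]
    exact abs_dotProduct_le x (E k)

lemma spec_nonneg {m n : ℕ} (W : Matrix (Fin m) (Fin n) ℝ) : 0 ≤ spec W := by
  apply Real.sSup_nonneg
  rintro c ⟨x, -, rfl⟩
  exact l2_nonneg _

lemma opNorm21_nonneg {m d : ℕ} (E : Matrix (Fin m) (Fin d) ℝ) : 0 ≤ opNorm21 E := by
  apply Real.sSup_nonneg
  rintro c ⟨x, -, rfl⟩
  exact l1_nonneg _

lemma softmax_nonneg {n : ℕ} (z : Fin n → ℝ) (j : Fin n) : 0 ≤ softmax z j :=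
  div_nonneg (Real.exp_pos _).le (Finset.sum_nonneg fun _ _ => (Real.exp_pos _).le)

lemma softmax_le_one {n : ℕ} (z : Fin n → ℝ) (j : Fin n) : softmax z j ≤ 1 :=
  div_le_one_of_le₀
    (Finset.single_le_sum (f := fun k => Real.exp (z k)) (fun _ _ => (Real.exp_pos _).le)
      (Finset.mem_univ j))
    (Finset.sum_nonneg fun _ _ => (Real.exp_pos _).le)

/-- Bound on the numerator of the directional derivative of a signed sum of softmax entries.
After dividing by `(∑ w)²` it says that, under the probability weights `w / ∑ w`, the mean absolute
deviation of `u` is at most its standard deviation, hence at most `M`. -/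
lemma softmax_deriv_bound {n : ℕ} (w u s : Fin n → ℝ) (M : ℝ) (hM : 0 ≤ M)
    (hw : ∀ j, 0 ≤ w j) (hs : ∀ j, s j ^ 2 = 1) (hu : ∀ j, |u j| ≤ M) :
    |(∑ j, s j * (w j * u j)) * (∑ j, w j) - (∑ j, s j * w j) * (∑ j, w j * u j)|
      ≤ M * (∑ j, w j) ^ 2 := by
  set D := ∑ j, w j with hD
  set D' := ∑ j, w j * u j with hD'
  have hD0 : 0 ≤ D := Finset.sum_nonneg fun j _ => hw j
  have e : (∑ j, s j * (w j * u j)) * D - (∑ j, s j * w j) * D'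
      = ∑ j, s j * w j * (u j * D - D') := by
    rw [Finset.sum_mul, Finset.sum_mul, ← Finset.sum_sub_distrib]
    exact Finset.sum_congr rfl fun j _ => by ring
  have cs : (∑ j, s j * w j * (u j * D - D')) ^ 2
      ≤ (∑ j, w j) * ∑ j, w j * (u j * D - D') ^ 2 := by
    refine Finset.sum_sq_le_sum_mul_sum_of_sq_le_mul _ (fun j _ => hw j)
      (fun j _ => mul_nonneg (hw j) (sq_nonneg _)) fun j _ => ?_
    rw [mul_pow, mul_pow, hs]
    exact le_of_eq (by ring)
  have v : ∑ j, w j * (u j * D - D') ^ 2 = D ^ 2 * (∑ j, w j * u j ^ 2) - D * D' ^ 2 := by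
    have : ∀ j, w j * (u j * D - D') ^ 2
        = D ^ 2 * (w j * u j ^ 2) - 2 * D * D' * (w j * u j) + D' ^ 2 * w j := fun j => by ring
    simp only [this, Finset.sum_add_distrib, Finset.sum_sub_distrib, ← Finset.mul_sum]
    rw [← hD, ← hD']
    ring
  have m2 : ∑ j, w j * u j ^ 2 ≤ D * M ^ 2 := by
    rw [hD, Finset.sum_mul]
    refine Finset.sum_le_sum fun j _ => mul_le_mul_of_nonneg_left ?_ (hw j)
    exact sq_le_sq' (abs_le.1 (hu j)).1 (abs_le.1 (hu j)).2
  rw [e]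
  apply abs_le_of_sq_le_sq _ (by positivity)
  refine cs.trans ?_
  rw [v, ← hD]
  have h1 : D ^ 2 * (∑ j, w j * u j ^ 2) ≤ D ^ 2 * (D * M ^ 2) :=
    mul_le_mul_of_nonneg_left m2 (sq_nonneg _)
  have h2 : 0 ≤ D * D' ^ 2 := by positivity
  calc D * (D ^ 2 * (∑ j, w j * u j ^ 2) - D * D' ^ 2) ≤ D * (D ^ 2 * (D * M ^ 2)) :=
        mul_le_mul_of_nonneg_left (by linarith) hD0
    _ = (M * D ^ 2) ^ 2 := by ring

/-- Softmax is 1-Lipschitz from `ℓ^∞` to `ℓ¹`. -/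
lemma l1_softmax_sub_le {n : ℕ} (z y : Fin n → ℝ) (M : ℝ) (hM : 0 ≤ M)
    (h : ∀ j, |z j - y j| ≤ M) : l1 (softmax z - softmax y) ≤ M := by
  rcases isEmpty_or_nonempty (Fin n) with hn | hn
  · simpa [l1] using hM
  set u : Fin n → ℝ := fun j => z j - y j with hu
  -- signs realising the `ℓ¹` norm as a linear functional
  set s : Fin n → ℝ := fun j => if 0 ≤ softmax z j - softmax y j then 1 else -1 with hs
  have hs1 : ∀ j, s j ^ 2 = 1 := by
    intro j
    simp only [hs]
    split_ifs <;> norm_num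
  have hl : l1 (softmax z - softmax y) = ∑ j, s j * softmax z j - ∑ j, s j * softmax y j := by
    rw [l1, ← Finset.sum_sub_distrib]
    refine Finset.sum_congr rfl fun j _ => ?_
    simp only [hs, Pi.sub_apply]
    split_ifs with hj
    · rw [abs_of_nonneg hj]
      ring
    · rw [abs_of_neg (not_le.1 hj)]
      ring
  -- the signed sum along the segment from `y` to `z`
  set w : ℝ → Fin n → ℝ := fun t j => Real.exp (y j + t * u j) with hw
  set f : ℝ → ℝ := fun t => (∑ j, s j * w t j) / ∑ j, w t j with hf
  have hDpos : ∀ t, 0 < ∑ j, w t j := fun t =>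
    Finset.sum_pos (fun j _ => Real.exp_pos _) Finset.univ_nonempty
  have hwd : ∀ t j, HasDerivAt (fun t => w t j) (w t j * u j) t := by
    intro t j
    have := (((hasDerivAt_id t).mul_const (u j)).const_add (y j)).exp
    simpa [hw] using this
  have hfd : ∀ t, HasDerivAt f (((∑ j, s j * (w t j * u j)) * (∑ j, w t j)
      - (∑ j, s j * w t j) * (∑ j, w t j * u j)) / (∑ j, w t j) ^ 2) t := fun t =>
    (HasDerivAt.fun_sum fun j _ => (hwd t j).const_mul (s j)).div
      (HasDerivAt.fun_sum fun j _ => hwd t j) (hDpos t).ne'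
  have hb : ∀ t, ‖((∑ j, s j * (w t j * u j)) * (∑ j, w t j)
      - (∑ j, s j * w t j) * (∑ j, w t j * u j)) / (∑ j, w t j) ^ 2‖ ≤ M := by
    intro t
    rw [Real.norm_eq_abs, abs_div, abs_of_pos (pow_pos (hDpos t) 2),
      div_le_iff₀ (pow_pos (hDpos t) 2)]
    exact softmax_deriv_bound _ _ _ M hM (fun j => (Real.exp_pos _).le) hs1 h
  have key : ‖f 1 - f 0‖ ≤ M :=
    norm_image_sub_le_of_norm_deriv_le_segment_01' (fun t _ => (hfd t).hasDerivWithinAt)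
      fun t _ => hb t
  have hf1 : f 1 = ∑ j, s j * softmax z j := by
    simp [hf, hw, hu, softmax, Finset.sum_div, mul_div_assoc]
  have hf0 : f 0 = ∑ j, s j * softmax y j := by
    simp [hf, hw, softmax, Finset.sum_div, mul_div_assoc]
  rw [hl, ← hf1, ← hf0]
  exact (le_abs_self _).trans key

/-- The bilinear attention score is Lipschitz on the ball of radius `R`. -/
lemma abs_score_sub_le {d : ℕ} (R : ℝ) (WQ WK : Matrix (Fin d) (Fin d) ℝ)
    (x x' y y' : Fin d → ℝ) (hx' : l2 x' ≤ R) (hy : l2 y ≤ R) :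
    |(x ᵥ* WQ) ⬝ᵥ (y ᵥ* WK) - (x' ᵥ* WQ) ⬝ᵥ (y' ᵥ* WK)|
      ≤ spec WQ * spec WK * R * (l2 (x - x') + l2 (y - y')) := by
  have hR : 0 ≤ R := (l2_nonneg _).trans hy
  have hQ := spec_nonneg WQ
  have hK := spec_nonneg WK
  have e : (x ᵥ* WQ) ⬝ᵥ (y ᵥ* WK) - (x' ᵥ* WQ) ⬝ᵥ (y' ᵥ* WK)
      = ((x - x') ᵥ* WQ) ⬝ᵥ (y ᵥ* WK) + (x' ᵥ* WQ) ⬝ᵥ ((y - y') ᵥ* WK) := by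
    simp only [Matrix.sub_vecMul, sub_dotProduct, dotProduct_sub]
    ring
  have b : ∀ p q : Fin d → ℝ,
      |(p ᵥ* WQ) ⬝ᵥ (q ᵥ* WK)| ≤ (spec WQ * l2 p) * (spec WK * l2 q) := fun p q =>
    (abs_dotProduct_le _ _).trans <| mul_le_mul (l2_vecMul_le_spec _ _) (l2_vecMul_le_spec _ _)
      (l2_nonneg _) (mul_nonneg hQ (l2_nonneg _))
  rw [e]
  calc _ ≤ _ := abs_add_le _ _
    _ ≤ (spec WQ * l2 (x - x')) * (spec WK * R) + (spec WQ * R) * (spec WK * l2 (y - y')) := by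
        have h1 := l2_nonneg (x - x')
        have h2 := l2_nonneg (y - y')
        refine add_le_add ((b _ _).trans ?_) ((b _ _).trans ?_) <;> gcongr
    _ = _ := by ring

/-- Attention before the value and output maps: perturbing the input moves the convex
combination of rows by at most the total row displacement plus `R` times the `ℓ¹` change of the
weights, the latter being at most the change `M` of the scores. -/
lemma l2_attention_sub_le {B d : ℕ} (R M : ℝ) (hM : 0 ≤ M) (X Xh : Matrix (Fin B) (Fin d) ℝ)
    (hXh : ∀ i, l2 (Xh i) ≤ R) (hR : 0 ≤ R) (z y : Fin B → ℝ) (h : ∀ j, |z j - y j| ≤ M) :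
    l2 (softmax z ᵥ* X - softmax y ᵥ* Xh) ≤ ∑ j, l2 (X j - Xh j) + M * R := by
  have e : softmax z ᵥ* X - softmax y ᵥ* Xh
      = softmax z ᵥ* (X - Xh) + (softmax z - softmax y) ᵥ* Xh := by
    rw [Matrix.vecMul_sub, Matrix.sub_vecMul]
    abel
  rw [e]
  refine (l2_add_le _ _).trans (add_le_add ?_ ?_)
  · refine (l2_vecMul_le _ _).trans (Finset.sum_le_sum fun j _ => ?_)
    rw [abs_of_nonneg (softmax_nonneg _ _)]
    exact mul_le_of_le_one_left (l2_nonneg _) (softmax_le_one _ _)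
  · calc _ ≤ _ := l2_vecMul_le _ _
      _ ≤ ∑ j, |(softmax z - softmax y) j| * R :=
          Finset.sum_le_sum fun j _ => mul_le_mul_of_nonneg_left (hXh j) (abs_nonneg _)
      _ = l1 (softmax z - softmax y) * R := by rw [l1, Finset.sum_mul]
      _ ≤ M * R := mul_le_mul_of_nonneg_right (l1_softmax_sub_le z y M hM h) hR

lemma l2_map_sub_le {n : ℕ} (σ : ℝ → ℝ) (G : ℝ) (hG : 0 ≤ G)
    (hσ : ∀ a b : ℝ, |σ a - σ b| ≤ G * |a - b|) (v w : Fin n → ℝ) :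
    l2 ((fun k => σ (v k)) - fun k => σ (w k)) ≤ G * l2 (v - w) := by
  apply Real.sqrt_le_iff.2
  refine ⟨mul_nonneg hG (l2_nonneg _), ?_⟩
  rw [mul_pow, l2, Real.sq_sqrt (Finset.sum_nonneg fun _ _ => sq_nonneg _), Finset.mul_sum]
  refine Finset.sum_le_sum fun k _ => ?_
  rw [← mul_pow]
  apply sq_le_sq.2
  simpa [abs_mul, abs_of_nonneg hG] using hσ (v k) (w k)

/-- Everything after the attention average is a Lipschitz map of that average. -/
lemma l1_head_sub_le {d dint m : ℕ} (Gσ : ℝ) (hG : 0 ≤ Gσ)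
    (WV WO : Matrix (Fin d) (Fin d) ℝ)
    (WU : Matrix (Fin d) (Fin dint) ℝ) (WD : Matrix (Fin dint) (Fin d) ℝ)
    (E : Matrix (Fin m) (Fin d) ℝ) (σ : ℝ → ℝ)
    (hσ : ∀ a b : ℝ, |σ a - σ b| ≤ Gσ * |a - b|) (c c' : Fin d → ℝ) :
    l1 (softmax (((fun k => σ ((((c ᵥ* WV) ᵥ* WO) ᵥ* WU) k)) ᵥ* WD) ᵥ* Eᵀ)
        - softmax (((fun k => σ ((((c' ᵥ* WV) ᵥ* WO) ᵥ* WU) k)) ᵥ* WD) ᵥ* Eᵀ))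
      ≤ opNorm21 E * spec WD * Gσ * spec WU * spec WO * spec WV * l2 (c - c') := by
  have hE := opNorm21_nonneg E
  have hD := spec_nonneg WD
  have hU := spec_nonneg WU
  have hO := spec_nonneg WO
  set r := ((c ᵥ* WV) ᵥ* WO) ᵥ* WU with hr
  set r' := ((c' ᵥ* WV) ᵥ* WO) ᵥ* WU with hr'
  set g := (fun k => σ (r k)) with hg
  set g' := (fun k => σ (r' k)) with hg'
  have hrr : r - r' = (((c - c') ᵥ* WV) ᵥ* WO) ᵥ* WU := by
    simp only [hr, hr', Matrix.sub_vecMul]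
  calc _ ≤ l1 (((g - g') ᵥ* WD) ᵥ* Eᵀ) := by
        refine l1_softmax_sub_le _ _ _ (l1_nonneg _) fun j => ?_
        rw [Matrix.sub_vecMul, Matrix.sub_vecMul]
        exact Finset.single_le_sum
          (f := fun j => |((g ᵥ* WD) ᵥ* Eᵀ - (g' ᵥ* WD) ᵥ* Eᵀ) j|)
          (fun _ _ => abs_nonneg _) (Finset.mem_univ j)
    _ ≤ opNorm21 E * (spec WD * (Gσ * (spec WU * (spec WO * (spec WV * l2 (c - c')))))) := by
        refine (l1_vecMul_le_opNorm21 _ _).trans (mul_le_mul_of_nonneg_left ?_ hE)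
        refine (l2_vecMul_le_spec _ _).trans (mul_le_mul_of_nonneg_left ?_ hD)
        refine (l2_map_sub_le σ Gσ hG hσ r r').trans (mul_le_mul_of_nonneg_left ?_ hG)
        rw [hrr]
        refine (l2_vecMul_le_spec _ _).trans (mul_le_mul_of_nonneg_left ?_ hU)
        exact (l2_vecMul_le_spec _ _).trans
          (mul_le_mul_of_nonneg_left (l2_vecMul_le_spec _ _) hO)
    _ = _ := by ring

/-- Lipschitz continuity of a single-layer transformer with respect
to its input: `Σ_i ‖p_i − p̂_i‖₁ ≤ G Σ_i ‖x_i − x̂_i‖₂` with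
`G = ‖E‖_{2→1}‖W_D‖₂ G_σ ‖W_U‖₂‖W_O‖₂‖W_V‖₂ B (2R²‖W_Q‖₂‖W_K‖₂/√d + 1)`. -/
theorem transformer_layer_lipschitz {B d dint m : ℕ} (R Gσ : ℝ)
    (X Xh : Matrix (Fin B) (Fin d) ℝ)
    (hX : ∀ i, l2 (X i) ≤ R) (hXh : ∀ i, l2 (Xh i) ≤ R)
    (WQ WK WV WO : Matrix (Fin d) (Fin d) ℝ)
    (WU : Matrix (Fin d) (Fin dint) ℝ) (WD : Matrix (Fin dint) (Fin d) ℝ)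
    (E : Matrix (Fin m) (Fin d) ℝ) (σ : ℝ → ℝ)
    (hσ : ∀ a b : ℝ, |σ a - σ b| ≤ Gσ * |a - b|) :
    ∑ i, l1 (fun j => layerP WQ WK WV WO WU WD E σ X i j
                    - layerP WQ WK WV WO WU WD E σ Xh i j)
      ≤ (opNorm21 E * spec WD * Gσ * spec WU * spec WO * spec WV * B
          * (2 * R^2 * spec WQ * spec WK / Real.sqrt d + 1))
        * ∑ i, l2 (fun k => X i k - Xh i k) := by
  rcases isEmpty_or_nonempty (Fin B) with hB | ⟨⟨i₀⟩⟩
  · simp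
  have hB1 : (1 : ℝ) ≤ B := by
    exact_mod_cast (Nat.zero_le _).trans_lt i₀.isLt
  have hR : 0 ≤ R := (l2_nonneg _).trans (hX i₀)
  have hG : 0 ≤ Gσ := by
    have := (abs_nonneg _).trans (hσ 1 0)
    simpa using this
  set K := opNorm21 E * spec WD * Gσ * spec WU * spec WO * spec WV with hK
  have hK0 : 0 ≤ K := by
    have := opNorm21_nonneg E
    have := spec_nonneg WD
    have := spec_nonneg WU
    have := spec_nonneg WO
    have := spec_nonneg WV
    positivity
  set c := spec WQ * spec WK / Real.sqrt d with hc
  have hc0 : 0 ≤ c := by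
    have := spec_nonneg WQ
    have := spec_nonneg WK
    positivity
  set Δ : Fin B → ℝ := fun i => l2 (X i - Xh i) with hΔ
  have hΔ0 : ∀ i, 0 ≤ Δ i := fun i => l2_nonneg _
  set S := ∑ i, Δ i with hS
  have hS0 : 0 ≤ S := Finset.sum_nonneg fun i _ => hΔ0 i
  have hΔS : ∀ i, Δ i ≤ S := fun i =>
    Finset.single_le_sum (fun j _ => hΔ0 j) (Finset.mem_univ i)
  have row : ∀ i, l1 (layerP WQ WK WV WO WU WD E σ X i - layerP WQ WK WV WO WU WD E σ Xh i)
      ≤ K * (S + c * R * (Δ i + S) * R) := by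
    intro i
    simp only [layerP, ← Matrix.vecMul_vecMul]
    refine (l1_head_sub_le Gσ hG WV WO WU WD E σ hσ _ _).trans
      (mul_le_mul_of_nonneg_left ?_ hK0)
    refine l2_attention_sub_le R _ (by have := hΔ0 i; positivity) X Xh hXh hR _ _ fun j => ?_
    have hsc := abs_score_sub_le R WQ WK (X i) (Xh i) (X j) (Xh j) (hXh i) (hX j)
    have hsc' : |(X i ᵥ* WQ) ⬝ᵥ (X j ᵥ* WK) - (Xh i ᵥ* WQ) ⬝ᵥ (Xh j ᵥ* WK)|
        ≤ spec WQ * spec WK * R * (Δ i + S) := by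
      refine hsc.trans (mul_le_mul_of_nonneg_left (add_le_add le_rfl (hΔS j)) ?_)
      have := spec_nonneg WQ
      have := spec_nonneg WK
      positivity
    rw [← sub_div, abs_div, abs_of_nonneg (Real.sqrt_nonneg _)]
    refine (div_le_div_of_nonneg_right hsc' (Real.sqrt_nonneg _)).trans_eq ?_
    rw [hc]
    ring
  calc _ ≤ ∑ i, K * (S + c * R * (Δ i + S) * R) := Finset.sum_le_sum fun i _ => row i
    _ = K * (B * S + c * R ^ 2 * (S + B * S)) := by
        rw [← Finset.mul_sum, Finset.sum_add_distrib, ← Finset.sum_mul, ← Finset.mul_sum,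
          Finset.sum_add_distrib]
        simp only [Finset.sum_const, Finset.card_univ, Fintype.card_fin, nsmul_eq_mul, ← hS]
        ring
    _ ≤ K * (B * S + c * R ^ 2 * (B * S + B * S)) := by
        have : S ≤ B * S := le_mul_of_one_le_left hS0 hB1
        gcongr
    _ = K * B * (2 * R ^ 2 * spec WQ * spec WK / Real.sqrt d + 1) * S := by
        rw [hc]
        ring
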